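/- arXiv:1901.07248 — 5 statements merged into one kernel-verified Lean document; each statement's English description precedes it below -/
import Mathlib

section
/- Let G be a finite connected simple graph and A a vertex of G. Then the sages win on G with hint A−{i} for every color i ∈ Fin 3, if and only if G is not a tree. (Equivalently: the sages lose on G with the hint A−1 if and only if G is a tree.) -/
/-!
The hint leaves two colors for `A`, the other sages keep three.

*Trees lose.* If `ℓ ≠ A` is a leaf with neighbor `b`, a winning strategy on `G` yields one on `G - ℓ`.
Call a color `x` of `b` *bad* (for a given coloring of the rest) if `b` guesses `x` for both of the
hats of `ℓ` for which `ℓ` is wrong when he sees `x`. Two 2-element subsets of `Fin 3` intersect, so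
there is at most one bad color and on `G - ℓ` the sage `b` can guess it (`WinOn.remove_leaf`).
Since a nontrivial tree has two leaves, induction reduces to the one-vertex tree, where `A` has two
colors left and makes a single guess.

*Graphs with a cycle win.* A hint moves along an edge `a b` (`WinOn.extend`): if `a` has two colors
left, he guesses so that he is wrong only if his hat tells whether `b` has color `k`, where `k` is
chosen freely; then `b` either knows his color or has the hint `b - k`. Hence the sages on a path
win if both ends have hints (`winOn_path`). If `A` lies on a cycle with neighbors `u ≠ w` on it, fix
`i ≠ j`. The sage `A` guesses so that he is wrong only if his hat tells whether
`c u = i ∨ c w = j`. If that holds, `u` guesses `i` and `w` guesses `j`; otherwise the path from `u`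
to `w` plays with the hints `u - i` and `w - j` (`winOn_of_isCycle`). A vertex `A` off the cycle
passes his hint along a path to the cycle (`winOn_of_walk_to_cycle`).
-/

/-- A strategy in the "Hats" game: each sage `v` maps a coloring of his
neighbourhood to a guess in `Fin 3`. -/
def HatStrategy {V : Type*} (G : SimpleGraph V) : Type _ :=
  ∀ v : V, (G.neighborSet v → Fin 3) → Fin 3

/-- The sage at `v` guesses his own hat color correctly for placement `c`. -/
def GuessesRight {V : Type*} {G : SimpleGraph V} (f : HatStrategy G)
    (c : V → Fin 3) (v : V) : Prop :=
  f v (fun u => c u.1) = c v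

/-- The sages win the "Hats" game on `G`. -/
def SagesWin {V : Type*} (G : SimpleGraph V) : Prop :=
  ∃ f : HatStrategy G, ∀ c : V → Fin 3, ∃ v : V, GuessesRight f c v

/-- The sages win on `G` with the hint `A − {i}`: the sage `A` does not get a hat
of color `i`. -/
def SagesWinAvoid {V : Type*} (G : SimpleGraph V) (A : V) (i : Fin 3) : Prop :=
  ∃ f : HatStrategy G, ∀ c : V → Fin 3, c A ≠ i → ∃ v : V, GuessesRight f c v

/-- `WinOn G S D`: some strategy on `G` guarantees that for each hat placement satisfying `D` a sage
in `S` guesses right. A strategy is encoded as a family of guesses depending on the whole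
placement, the guess at `v` being unaffected by hats of vertices not adjacent to `v`. -/
def WinOn {V : Type*} (G : SimpleGraph V) (S : Set V) (D : (V → Fin 3) → Prop) : Prop :=
  ∃ g : V → (V → Fin 3) → Fin 3,
    (∀ v c c', (∀ u, G.Adj v u → c u = c' u) → g v c = g v c') ∧
    ∀ c, D c → ∃ v ∈ S, g v c = c v

theorem sagesWinAvoid_iff_winOn {V : Type*} (G : SimpleGraph V) (A : V) (i : Fin 3) :
    SagesWinAvoid G A i ↔ WinOn G Set.univ (fun c => c A ≠ i) := by
  classical
  constructor
  · rintro ⟨f, hf⟩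
    refine ⟨fun v c => f v (fun u => c u.1), fun v c c' h => ?_, fun c hc => ?_⟩
    · exact congrArg (f v) (funext fun u => h u.1 u.2)
    · obtain ⟨v, hv⟩ := hf c hc
      exact ⟨v, trivial, hv⟩
  · rintro ⟨g, hloc, hg⟩
    refine ⟨fun v r => g v (fun u => if h : G.Adj v u then r ⟨u, h⟩ else 0), fun c hc => ?_⟩
    obtain ⟨v, -, hv⟩ := hg c hc
    refine ⟨v, ?_⟩
    unfold GuessesRight
    rw [← hv]
    apply hloc
    intro u hu
    simp [hu]

theorem WinOn.mono {V : Type*} {G : SimpleGraph V} {S T : Set V} {D : (V → Fin 3) → Prop}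
    (h : WinOn G S D) (hST : S ⊆ T) : WinOn G T D := by
  obtain ⟨g, hloc, hg⟩ := h
  refine ⟨g, hloc, fun c hc => ?_⟩
  obtain ⟨v, hv, e⟩ := hg c hc
  exact ⟨v, hST hv, e⟩

/-- A hint at `b` can be traded for a hint at a neighbor `a` that joins the game. -/
theorem WinOn.extend {V : Type*} {G : SimpleGraph V} {S : Set V} {D : (V → Fin 3) → Prop}
    {a b : V} (hab : G.Adj a b) (haS : a ∉ S) (hbS : b ∈ S) (i k : Fin 3)
    (h : WinOn G S (fun c => c b ≠ k ∧ D c)) :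
    WinOn G (insert a S) (fun c => c a ≠ i ∧ D c) := by
  classical
  obtain ⟨g, hloc, hg⟩ := h
  -- If `a` is wrong and `c a ≠ i`, then `c a = i + 1` exactly when `c b = k`.
  refine ⟨fun v c =>
    if v = a then (if c b = k then i + 2 else i + 1)
    else if v = b then (if c a = i + 1 then k else g b c)
    else g v c, ?_, ?_⟩
  · intro v c c' h
    by_cases hva : v = a
    · subst hva
      simp [h b hab]
    · by_cases hvb : v = b
      · subst hvb
        simp [hva, h a hab.symm, hloc v c c' h]
      · simp [hva, hvb, hloc v c c' h]
  · rintro c ⟨hca, hD⟩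
    by_cases ha : (if c b = k then i + 2 else i + 1) = c a
    · exact ⟨a, Set.mem_insert _ _, by simpa using ha⟩
    · have hba : b ≠ a := hab.ne'
      by_cases hb : c b = k
      · refine ⟨b, Set.mem_insert_of_mem _ hbS, ?_⟩
        have : c a = i + 1 := by
          rw [if_pos hb] at ha
          revert ha hca
          generalize c a = x
          revert x i
          decide
        simp [hba, this, hb]
      · obtain ⟨v, hv, e⟩ := hg c ⟨hb, hD⟩
        rw [if_neg hb] at ha
        refine ⟨v, Set.mem_insert_of_mem _ hv, ?_⟩
        have hva : v ≠ a := fun h => haS (h ▸ hv)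
        by_cases hvb : v = b
        · subst hvb
          simp [hva, Ne.symm ha, e]
        · simp [hva, hvb, e]

/-- The sages on a path win if both ends have hints. The colors are required to be distinct in order
to include the path with a single vertex. -/
theorem winOn_path {V : Type*} {G : SimpleGraph V} {u w : V} (p : G.Walk u w) (hp : p.IsPath)
    {i j : Fin 3} (hij : i ≠ j) :
    WinOn G {v | v ∈ p.support} (fun c => c u ≠ i ∧ c w ≠ j) := by
  induction p generalizing i with
  | nil =>
    -- The one color other than `i` and `j` is `-i-j`, as the colors sum to `0` in `Fin 3`.
    refine ⟨fun _ _ => -i - j, fun _ _ _ _ => rfl, fun c hc => ⟨_, List.mem_singleton_self _, ?_⟩⟩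
    obtain ⟨h1, h2⟩ := hc
    revert h1 h2
    generalize c _ = x
    exact (show ∀ i j x : Fin 3, i ≠ j → x ≠ i → x ≠ j → -i - j = x by decide) i j x hij
  | cons h q ih =>
    rw [SimpleGraph.Walk.cons_isPath_iff] at hp
    have hk : j + 1 ≠ j := by
      clear ih hij
      revert j
      decide
    refine ((ih hp.1 hk).extend h hp.2 (by simp) i).mono ?_
    intro v hv
    simpa using hv

/-- Two neighbors of `a` that are joined by a path avoiding `a` let the sages win with a hint
at `a`. -/
theorem winOn_of_path_avoiding {V : Type*} {G : SimpleGraph V} {a u w : V} (hau : G.Adj a u)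
    (haw : G.Adj a w) (huw : u ≠ w) (p : G.Walk u w) (hp : p.IsPath) (hap : a ∉ p.support)
    (i : Fin 3) : WinOn G (insert a {v | v ∈ p.support}) (fun c => c a ≠ i) := by
  classical
  obtain ⟨g, hloc, hg⟩ := winOn_path p hp (show (0 : Fin 3) ≠ 1 by decide)
  -- If `a` is wrong, then `c a = i + 1` exactly when `c u = 0 ∨ c w = 1`.
  refine ⟨fun v c =>
    if v = a then (if c u = 0 ∨ c w = 1 then i + 2 else i + 1)
    else if v = u then (if c a = i + 1 then 0 else g u c)
    else if v = w then (if c a = i + 1 then 1 else g w c)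
    else g v c, ?_, ?_⟩
  · intro v c c' h
    by_cases hva : v = a
    · subst hva
      simp [h u hau, h w haw]
    · by_cases hvu : v = u
      · subst hvu
        simp [hva, h a hau.symm, hloc v c c' h]
      · by_cases hvw : v = w
        · subst hvw
          simp [hva, hvu, h a haw.symm, hloc v c c' h]
        · simp [hva, hvu, hvw, hloc v c c' h]
  · intro c hca
    by_cases ha : (if c u = 0 ∨ c w = 1 then i + 2 else i + 1) = c a
    · exact ⟨a, Set.mem_insert _ _, by simpa using ha⟩
    · by_cases hb : c u = 0 ∨ c w = 1
      · have hca1 : c a = i + 1 := by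
          rw [if_pos hb] at ha
          revert ha hca
          generalize c a = x
          revert x i
          decide
        rcases hb with hb | hb
        · exact ⟨u, Set.mem_insert_of_mem _ (by simp), by simp [hau.ne', hca1, hb]⟩
        · exact ⟨w, Set.mem_insert_of_mem _ (by simp), by simp [haw.ne', huw.symm, hca1, hb]⟩
      · rw [if_neg hb] at ha
        push Not at hb
        obtain ⟨v, hv, e⟩ := hg c hb
        refine ⟨v, Set.mem_insert_of_mem _ hv, ?_⟩
        have hva : v ≠ a := fun h => hap (h ▸ hv)
        by_cases hvu : v = u
        · subst hvu
          simp [hva, Ne.symm ha, e]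
        · by_cases hvw : v = w
          · subst hvw
            simp [hva, hvu, Ne.symm ha, e]
          · simp [hva, hvu, hvw, e]

theorem winOn_of_isCycle {V : Type*} {G : SimpleGraph V} {a : V} (C : G.Walk a a)
    (hC : C.IsCycle) (i : Fin 3) : WinOn G {v | v ∈ C.support} (fun c => c a ≠ i) := by
  cases C with
  | nil => simp at hC
  | @cons _ u _ hau p =>
    rw [SimpleGraph.Walk.cons_isCycle_iff] at hC
    obtain ⟨hp, he⟩ := hC
    -- Cutting off the last edge of the cycle leaves a path between the two neighbors of `a`.
    obtain ⟨r, hr⟩ : ∃ r, r = p.reverse := ⟨_, rfl⟩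
    have hrp : r.IsPath := hr ▸ hp.reverse
    have hre : s(a, u) ∉ r.edges := by simpa [hr] using he
    have hrs : ∀ v, v ∈ r.support → v ∈ p.support := by simp [hr]
    clear hr
    cases r with
    | nil => exact absurd rfl hau.ne
    | @cons _ w _ haw q =>
      rw [SimpleGraph.Walk.cons_isPath_iff] at hrp
      have hwu : w ≠ u := by
        rintro rfl
        simp at hre
      refine (winOn_of_path_avoiding haw hau hwu q hrp.1 hrp.2 i).mono ?_
      intro v hv
      have : v ∈ (SimpleGraph.Walk.cons haw q).support := by simpa using hv
      simp [hrs v this]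

theorem winOn_of_walk_to_cycle {V : Type*} {G : SimpleGraph V} {z : V} (C : G.Walk z z)
    (hC : C.IsCycle) {a : V} (p : G.Walk a z) (hp : p.IsPath) (i : Fin 3) :
    WinOn G {v | v ∈ C.support ∨ v ∈ p.support} (fun c => c a ≠ i) := by
  classical
  induction p generalizing i with
  | nil => exact (winOn_of_isCycle C hC i).mono fun v hv => Or.inl hv
  | @cons a b _ hab q ih =>
    rw [SimpleGraph.Walk.cons_isPath_iff] at hp
    by_cases ha : a ∈ C.support
    · refine (winOn_of_isCycle (C.rotate a ha) (hC.rotate ha) i).mono fun v hv => Or.inl ?_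
      exact (SimpleGraph.Walk.mem_support_rotate_iff _ _ _).1 hv
    · have h := ih C hC hp.1 0
      have h' := WinOn.extend (S := {v | v ∈ C.support ∨ v ∈ q.support}) (D := fun _ => True) hab
        (fun hv => Or.elim hv ha hp.2) (Or.inr q.start_mem_support) i 0 (by simpa using h)
      have h'' := h'.mono (T := {v | v ∈ C.support ∨ v ∈ (SimpleGraph.Walk.cons hab q).support}) (by
        intro v hv
        simp only [Set.mem_insert_iff, Set.mem_ofPred_eq] at hv
        simp only [SimpleGraph.Walk.support_cons, List.mem_cons, Set.mem_ofPred_eq]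
        tauto)
      simpa using h''

/-- At most one color `x` satisfies `φ y = x` for both `y ≠ w x`, as two 2-element subsets of
`Fin 3` intersect. -/
theorem exists_pick (w : Fin 3 → Fin 3) : ∃ pick : (Fin 3 → Fin 3) → Fin 3,
    ∀ φ x, (∀ y, y ≠ w x → φ y = x) → pick φ = x := by
  have key : ∀ φ : Fin 3 → Fin 3, ∃ z, ∀ x, (∀ y, y ≠ w x → φ y = x) → z = x := by
    intro φ
    by_cases h : ∃ x, ∀ y, y ≠ w x → φ y = x
    · obtain ⟨z, hz⟩ := h
      refine ⟨z, fun x hx => ?_⟩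
      have : ∀ s t : Fin 3, ∃ y, y ≠ s ∧ y ≠ t := by decide
      obtain ⟨y, h1, h2⟩ := this (w z) (w x)
      rw [← hz y h1, hx y h2]
    · exact ⟨0, fun x hx => absurd ⟨x, hx⟩ h⟩
  choose pick hpick using key
  exact ⟨pick, hpick⟩

theorem WinOn.remove_leaf {V : Type*} {G : SimpleGraph V} {A l b : V} (hlA : A ≠ l)
    (hlb : G.Adj l b) (huniq : ∀ v, G.Adj l v → v = b) {i : Fin 3}
    (h : WinOn G Set.univ (fun c => c A ≠ i)) :
    WinOn (G.induce {l}ᶜ) Set.univ (fun c => c ⟨A, hlA⟩ ≠ i) := by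
  classical
  obtain ⟨g, hloc, hg⟩ := h
  -- The guess of the leaf `l` depends only on the color `x` of `b`; it is `g l (fun _ => x)`.
  obtain ⟨pick, hpick⟩ := exists_pick (fun x => g l (fun _ => x))
  let ext : (({l}ᶜ : Set V) → Fin 3) → Fin 3 → V → Fin 3 :=
    fun r y v => if h : v = l then y else r ⟨v, h⟩
  have ext_l : ∀ r y, ext r y l = y := fun r y => by simp [ext]
  have ext_ne : ∀ r y v (h : v ≠ l), ext r y v = r ⟨v, h⟩ := fun r y v h => by simp [ext, h]
  have hext : ∀ (v : ({l}ᶜ : Set V)) r r' y, (∀ u, (G.induce {l}ᶜ).Adj v u → r u = r' u) →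
      g v (ext r y) = g v (ext r' y) := by
    intro v r r' y h
    apply hloc
    intro u hu
    by_cases hul : u = l
    · subst hul
      rw [ext_l, ext_l]
    · rw [ext_ne _ _ _ hul, ext_ne _ _ _ hul]
      exact h ⟨u, hul⟩ hu
  refine ⟨fun v r => if v.1 = b then pick (fun y => g b (ext r y)) else g v (ext r 0), ?_, ?_⟩
  · intro v r r' h
    by_cases hvb : v.1 = b
    · simp only [hvb, if_true]
      congr 1
      funext y
      rw [← hvb]
      exact hext v r r' y h
    · simp only [hvb, if_false]
      exact hext v r r' 0 h
  · intro r hr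
    by_contra! hno
    have hbl : b ≠ l := hlb.ne'
    have hb := hno ⟨b, hbl⟩ trivial
    simp only [if_true] at hb
    have hnb : ¬ ∀ y, y ≠ g l (fun _ => r ⟨b, hbl⟩) → g b (ext r y) = r ⟨b, hbl⟩ :=
      fun hh => hb (hpick _ _ hh)
    push Not at hnb
    obtain ⟨y, hy, hyb⟩ := hnb
    obtain ⟨v, -, hv⟩ := hg (ext r y) (by simpa only [ext_ne _ _ _ hlA] using hr)
    by_cases hvl : v = l
    · subst hvl
      rw [ext_l] at hv
      apply hy
      rw [← hv]
      apply hloc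
      intro u hu
      obtain rfl := huniq u hu
      rw [ext_ne _ _ _ hbl]
    · rw [ext_ne _ _ _ hvl] at hv
      by_cases hvb : v = b
      · subst hvb
        exact hyb hv
      · have h1 := hno ⟨v, hvl⟩ trivial
        simp only [hvb, if_false] at h1
        apply h1
        rw [← hv]
        apply hloc
        intro u hu
        have hul : u ≠ l := by
          rintro rfl
          exact hvb (huniq v hu.symm)
        rw [ext_ne _ _ _ hul, ext_ne _ _ _ hul]

theorem not_winOn_of_isTree (n : ℕ) : ∀ {V : Type*} [Fintype V] (G : SimpleGraph V) (_ : G.IsTree)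
    (A : V) (i : Fin 3), Fintype.card V = n → ¬ WinOn G Set.univ (fun c => c A ≠ i) := by
  classical
  induction n using Nat.strong_induction_on with
  | _ n ih =>
    intro V _ G hG A i hn hW
    rcases subsingleton_or_nontrivial V with hV | hV
    · obtain ⟨g, hloc, hg⟩ := hW
      have : ∀ s t : Fin 3, ∃ y, y ≠ s ∧ y ≠ t := by decide
      obtain ⟨y, h1, h2⟩ := this i (g A (fun _ => 0))
      obtain ⟨v, -, hv⟩ := hg (fun _ => y) h1
      obtain rfl := Subsingleton.elim v A
      apply h2
      rw [← hv]
      apply hloc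
      intro u hu
      exact absurd (Subsingleton.elim v u) hu.ne
    · obtain ⟨l, hlA, hl⟩ : ∃ l, A ≠ l ∧ G.degree l = 1 := by
        obtain ⟨u, v, huv, hu, hv⟩ := hG.exists_ne_and_degree_eq_one
        by_cases h : A = u
        · exact ⟨v, h ▸ huv, hv⟩
        · exact ⟨u, h, hu⟩
      obtain ⟨b, hlb, huniq⟩ := SimpleGraph.degree_eq_one_iff_existsUnique_adj.mp hl
      refine ih _ ?_ (G.induce {l}ᶜ)
        ⟨hG.1.induce_compl_singleton_of_degree_eq_one hl, hG.2.induce _⟩ ⟨A, hlA⟩ i rfl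
        (hW.remove_leaf hlA hlb huniq)
      rw [← hn]
      exact Fintype.card_subtype_lt (x := l) (by simp)

theorem win_with_avoid_hint_iff_not_tree {V : Type*} [Fintype V]
    (G : SimpleGraph V) (hG : G.Connected) (A : V) :
    (∀ i : Fin 3, SagesWinAvoid G A i) ↔ ¬ G.IsTree := by
  constructor
  · intro h hT
    exact not_winOn_of_isTree _ G hT A 0 rfl ((sagesWinAvoid_iff_winOn G A 0).1 (h 0))
  · intro hT i
    have hc : ¬ G.IsAcyclic := fun h => hT ⟨hG, h⟩
    simp only [SimpleGraph.IsAcyclic, not_forall, not_not] at hc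
    obtain ⟨z, C, hC⟩ := hc
    obtain ⟨p, hp⟩ := hG.exists_isPath A z
    rw [sagesWinAvoid_iff_winOn]
    exact (winOn_of_walk_to_cycle C hC p hp i).mono (Set.subset_univ _)
end

section
/- Let G be a finite connected simple graph and A ≠ B two vertices of G. Then the sages win on G with the hint A≠B. -/
/-- The sages win on `G` with the hint that `A` and `B` have different hat colors. -/
def SagesWinNe {V : Type*} (G : SimpleGraph V) (A B : V) : Prop :=
  ∃ f : HatStrategy G, ∀ c : V → Fin 3, c A ≠ c B → ∃ v : V, GuessesRight f c v

/-- The guess of an inner sage on the path who sees color `u` on the predecessor and `w` on the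
successor: `w + 2` if `u - w ∈ {0, 2}`, and `w` if `u - w = 1`. -/
def innerGuess (u w : Fin 3) : Fin 3 := if u = w + 1 then w else w + 2

/-- The invariant passes from the edge colored `u, v` to the next edge, colored `v, w`, if the sage
in between is wrong; `x` is the color at the start of the path. -/
theorem innerGuess_step (x u v w : Fin 3) (h : u = v + 1 ∨ (u = v ∧ v = x))
    (hv : innerGuess u w ≠ v) : v = w + 1 ∨ (v = w ∧ w = x) := by
  revert x u v w
  unfold innerGuess
  decide

theorem sagesWinNe_of_path {V : Type*} (G : SimpleGraph V) (p : ℕ → V) (n : ℕ) (hn : 0 < n)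
    (hinj : Set.InjOn p (Set.Iic n)) (hadj : ∀ i < n, G.Adj (p i) (p (i + 1))) :
    SagesWinNe G (p 0) (p n) := by
  classical
  obtain ⟨idx, hidx⟩ : ∃ idx : V → ℕ, ∀ i ≤ n, idx (p i) = i :=
    ⟨Function.invFunOn p (Set.Iic n), fun i hi => hinj.leftInvOn_invFunOn hi⟩
  -- `E v s` extends by `0` the coloring `s` seen by `v`, so that it can be read at any vertex.
  let E : ∀ v : V, (G.neighborSet v → Fin 3) → V → Fin 3 :=
    fun v s u => if h : G.Adj v u then s ⟨u, h⟩ else 0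
  have hE : ∀ (c : V → Fin 3) (v u : V), G.Adj v u → E v (fun u => c u.1) u = c u := by
    intro c v u h
    simp [E, h]
  let f : HatStrategy G := fun v s =>
    if idx v = 0 then E v s (p 1) + 2
    else if idx v = n then E v s (p (n - 1)) + 2
    else innerGuess (E v s (p (idx v - 1))) (E v s (p (idx v + 1)))
  refine ⟨f, fun c hc => ?_⟩
  by_contra! hwrong
  have inv : ∀ k < n, c (p k) = c (p (k + 1)) + 1 ∨
      (c (p k) = c (p (k + 1)) ∧ c (p (k + 1)) = c (p 0)) := by
    intro k
    induction k with
    | zero =>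
      intro _
      have h0 : c (p 1) + 2 ≠ c (p 0) := by
        have h := hwrong (p 0)
        simpa only [GuessesRight, f, hidx 0 (Nat.zero_le n), if_true,
          hE c _ _ (hadj 0 hn)] using h
      have key : ∀ a b : Fin 3, b + 2 ≠ a → a = b + 1 ∨ (a = b ∧ b = a) := by decide
      exact key _ _ h0
    | succ k ih =>
      intro hk
      refine innerGuess_step _ _ _ _ (ih (by omega)) ?_
      have h := hwrong (p (k + 1))
      simpa only [GuessesRight, f, hidx (k + 1) hk.le, if_neg (Nat.succ_ne_zero k), if_neg hk.ne,
        Nat.add_sub_cancel, hE c _ _ (hadj (k + 1) hk),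
        hE c _ _ (hadj k (by omega)).symm] using h
  obtain ⟨m, rfl⟩ : ∃ m, n = m + 1 := ⟨n - 1, by omega⟩
  have hlast : c (p m) + 2 ≠ c (p (m + 1)) := by
    have h := hwrong (p (m + 1))
    simpa only [GuessesRight, f, hidx (m + 1) le_rfl, if_neg (Nat.succ_ne_zero m), if_true,
      Nat.add_sub_cancel, hE c _ _ (hadj m (by omega)).symm] using h
  rcases inv m (by omega) with h | ⟨-, h⟩
  · have key : ∀ b : Fin 3, b + 1 + 2 = b := by decide
    exact hlast (by rw [h, key])
  · exact hc h.symm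

theorem connected_win_with_ne_hint {V : Type*} [Fintype V] (G : SimpleGraph V)
    (hG : G.Connected) (A B : V) (hAB : A ≠ B) :
    SagesWinNe G A B := by
  obtain ⟨q, hq⟩ := hG.exists_isPath A B
  have hpos : 0 < q.length := by
    rw [Nat.pos_iff_ne_zero]
    exact fun h => hAB (SimpleGraph.Walk.eq_of_length_eq_zero h)
  have := sagesWinNe_of_path G q.getVert q.length hpos hq.getVert_injOn
    (fun i hi => q.adj_getVert_succ hi)
  simpa using this
end

section
/- For any finite simple graph G and any vertex A, the sages win on G with the hint A* if and only if the sages win on G without hints. -/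
/-- The sages win on `G` with the hint `A*`: the sage `A` will get a hat of one
of only two colors, and learns these two colors only when the hat is put on. -/
def SagesWinStar {V : Type*} (G : SimpleGraph V) (A : V) : Prop :=
  ∃ (f : HatStrategy G) (g : Finset (Fin 3) → (G.neighborSet A → Fin 3) → Fin 3),
    ∀ S : Finset (Fin 3), S.card = 2 → ∀ c : V → Fin 3, c A ∈ S →
      g S (fun u => c u.1) = c A ∨ ∃ v : V, v ≠ A ∧ GuessesRight f c v

/-- The color `a` is bad for the coloring `x` of the neighbourhood of `A`: some placement compatible
with both makes all sages other than `A` guess wrong. -/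
def BadColor {V : Type*} {G : SimpleGraph V} (f : HatStrategy G) (A : V)
    (x : G.neighborSet A → Fin 3) (a : Fin 3) : Prop :=
  ∃ c : V → Fin 3, (fun u : G.neighborSet A => c u.1) = x ∧ c A = a ∧
    ∀ v : V, v ≠ A → ¬ GuessesRight f c v

theorem star_hint_no_effect {V : Type*} [Fintype V] (G : SimpleGraph V) (A : V) :
    SagesWinStar G A ↔ SagesWin G := by
  classical
  constructor
  · rintro ⟨f, g, hg⟩
    have bad_unique : ∀ x a b, BadColor f A x a → BadColor f A x b → a = b := by
      rintro x a b ⟨c, hcx, hca, hc⟩ ⟨d, hdx, hdb, hd⟩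
      by_contra hab
      have h1 := (hg {a, b} (Finset.card_pair hab) c (by simp [hca])).resolve_right
        (fun ⟨v, hv, h⟩ => hc v hv h)
      have h2 := (hg {a, b} (Finset.card_pair hab) d (by simp [hdb])).resolve_right
        (fun ⟨v, hv, h⟩ => hd v hv h)
      rw [hcx, hca] at h1
      rw [hdx, hdb] at h2
      exact hab (h1.symm.trans h2)
    let k : (G.neighborSet A → Fin 3) → Fin 3 :=
      fun x => if h : ∃ a, BadColor f A x a then h.choose else 0
    refine ⟨Function.update f A k, fun c => ?_⟩
    by_cases hc : ∃ v, v ≠ A ∧ GuessesRight f c v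
    · obtain ⟨v, hv, h⟩ := hc
      refine ⟨v, ?_⟩
      exact (congrFun (Function.update_of_ne hv k f) _).trans h
    · have hbad : BadColor f A (fun u => c u.1) (c A) :=
        ⟨c, rfl, rfl, fun v hv h => hc ⟨v, hv, h⟩⟩
      have hex : ∃ a, BadColor f A (fun u => c u.1) a := ⟨_, hbad⟩
      refine ⟨A, ?_⟩
      refine (congrFun (Function.update_self A k f) _).trans ?_
      simp only [k, dif_pos hex]
      exact bad_unique _ _ _ hex.choose_spec hbad
  · rintro ⟨f, hf⟩
    refine ⟨f, fun _ => f A, fun S _ c _ => ?_⟩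
    obtain ⟨v, hv⟩ := hf c
    by_cases h : v = A
    · subst h
      exact Or.inl hv
    · exact Or.inr ⟨v, h, hv⟩
end

section
/- Let G be a finite simple graph, B a vertex of G of degree 1, and A the unique neighbour of B. If the sages lose on the induced subgraph of G on the vertex set V(G) \ {B}, then the sages lose on G. -/
open Classical in
/-- Extend a coloring of the neighbours of `v` in `G - B` to the neighbours of `v` in `G`, giving
`B` the color `b` in case it is one of them. -/
noncomputable def extendNbhd {V : Type*} (G : SimpleGraph V) (B : V) (v : {v | v ≠ B})
    (x : (G.induce {v | v ≠ B}).neighborSet v → Fin 3) (b : Fin 3) :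
    G.neighborSet v.1 → Fin 3 :=
  fun u => if hu : u.1 = B then b else x ⟨⟨u.1, hu⟩, u.2⟩

/-- The color `a` is forced by `y : Fin 3 → Fin 3` (the guess of `A` as a function of the color of
`B`) if `A` guesses `a` whenever `B`, guessing `φ a`, is wrong. -/
def Forced (φ y : Fin 3 → Fin 3) (a : Fin 3) : Prop :=
  ∀ b, b ≠ φ a → y b = a

theorem Forced.unique {φ y : Fin 3 → Fin 3} {a a' : Fin 3}
    (h : Forced φ y a) (h' : Forced φ y a') : a = a' := by
  obtain ⟨b, hb, hb'⟩ : ∃ b : Fin 3, b ≠ φ a ∧ b ≠ φ a' := by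
    generalize φ a = p
    generalize φ a' = q
    revert p q
    decide
  rw [← h b hb, h' b hb']

theorem lose_after_adding_leaf {V : Type*} [Fintype V] (G : SimpleGraph V)
    (A B : V) (hN : G.neighborSet B = {A})
    (h : ¬ SagesWin (G.induce {v | v ≠ B})) : ¬ SagesWin G := by
  classical
  rintro ⟨f, hf⟩
  apply h
  have hBA : G.Adj B A := by
    have : A ∈ G.neighborSet B := by rw [hN]; rfl
    exact this
  have hAB : A ≠ B := hBA.ne'
  let φ : Fin 3 → Fin 3 := fun a => f B (fun _ => a)
  -- The color `0` passed to sages other than `A` is never seen, as they are not adjacent to `B`.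
  refine ⟨fun v x => if v.1 = A then
      (if hex : ∃ a, Forced φ (fun b => f v.1 (extendNbhd G B v x b)) a then hex.choose else 0)
    else f v.1 (extendNbhd G B v x 0), fun c => ?_⟩
  by_contra hc
  push Not at hc
  let ext : Fin 3 → V → Fin 3 := fun b u => if hu : u = B then b else c ⟨u, hu⟩
  have hforced : Forced φ (fun b => f A (extendNbhd G B ⟨A, hAB⟩ (fun u => c u.1) b))
      (c ⟨A, hAB⟩) := by
    intro b hb
    obtain ⟨v, hv⟩ := hf (ext b)
    unfold GuessesRight at hv
    by_cases hvB : v = B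
    · subst hvB
      have hview : (fun u : G.neighborSet v => ext b u.1) = fun _ => c ⟨A, hAB⟩ := by
        funext u
        have hu : u.1 = A := hN.subset u.2
        simp [ext, hu, hAB]
      rw [hview] at hv
      exact absurd (by simpa [ext] using hv.symm) hb
    · by_cases hvA : v = A
      · subst hvA
        have hcol : ext b v = c ⟨v, hvB⟩ := by simp [ext, hvB]
        rw [hcol] at hv
        exact hv
      · exfalso
        apply hc ⟨v, hvB⟩
        unfold GuessesRight
        have hview : extendNbhd G B ⟨v, hvB⟩ (fun u => c u.1) 0 =
            fun u : G.neighborSet v => ext b u.1 := by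
          funext u
          have hu : u.1 ≠ B := by
            intro hu
            have hadj : G.Adj v u.1 := u.2
            rw [hu] at hadj
            have : v ∈ G.neighborSet B := hadj.symm
            rw [hN] at this
            exact hvA this
          simp [extendNbhd, ext, hu]
        have hcol : ext b v = c ⟨v, hvB⟩ := by simp [ext, hvB]
        simp only [hvA, if_false]
        rw [hview, hv, hcol]
  apply hc ⟨A, hAB⟩
  unfold GuessesRight
  have hex : ∃ a, Forced φ (fun b => f A (extendNbhd G B ⟨A, hAB⟩ (fun u => c u.1) b)) a :=
    ⟨_, hforced⟩
  simp only [if_true]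
  rw [dif_pos hex]
  exact hex.choose_spec.unique hforced
end

section
/- Let G be a finite simple graph that contains two cycles whose vertex supports have exactly one common vertex. Then the sages win on G. -/
/-- The left bit of a color; on the colors `0, 1` it is injective. -/
def leftBit (a : Fin 3) : Bool := a == 1

/-- The right bit of a color; on the colors `0, 1` it is injective, and together with the left bit
it determines the color. -/
def rightBit (a : Fin 3) : Bool := a != 0

/-- The first of two bits that together determine a color. -/
def colorBit₁ (a : Fin 3) : Bool := a == 1

/-- The second of two bits that together determine a color. -/
def colorBit₂ (a : Fin 3) : Bool := a == 2

/-- The guess of the sage in position `i` of a cycle `x = p 0, p 1, …, p n = x`, who sees color `a`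
in position `i - 1` and `b` in position `i + 1`, when only the bit `β` of the color of `x` is
used. -/
def cycleGuess (β : Fin 3 → Bool) (n i : ℕ) (a b : Fin 3) : Fin 3 :=
  if i = 1 then (if β a then (if leftBit b then 1 else 0) else 2)
  else if i + 1 = n then (if β b then (if rightBit a then 0 else 1) else 2)
  else if rightBit a then (if leftBit b then 2 else 0) else 1

lemma cycleGuess_interior (β : Fin 3 → Bool) {n i : ℕ} (h1 : i ≠ 1) (hn : i + 1 ≠ n)
    (a b e : Fin 3) (hab : rightBit a ≠ leftBit e) (hw : cycleGuess β n i a b ≠ e) :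
    rightBit e ≠ leftBit b := by
  simp only [cycleGuess, h1, hn, if_false] at hw
  revert a b e; decide

/-- If the sages of the cycle other than `x = p 0 = p n` are all wrong, then the bit of `x` tells
whether a neighbour of `x` on the cycle has color `2`. -/
lemma bit_eq_of_all_wrong (β : Fin 3 → Bool) {n : ℕ} (hn : 3 ≤ n) (e : ℕ → Fin 3)
    (h0 : e n = e 0)
    (hw : ∀ i, 1 ≤ i → i < n → cycleGuess β n i (e (i - 1)) (e (i + 1)) ≠ e i) :
    decide (e 1 = 2 ∨ e (n - 1) = 2) = β (e 0) := by
  have w1 := hw 1 le_rfl (by omega)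
  have wn := hw (n - 1) (by omega) (by omega)
  have e1 : n - 1 + 1 = n := by omega
  have e2 : n - 1 ≠ 1 := by omega
  rw [e1, h0] at wn
  simp only [cycleGuess, e1, e2, if_true, if_false, Nat.sub_self] at w1 wn
  cases hb : β (e 0) with
  | false =>
    rw [hb] at w1 wn
    simp only [Bool.false_eq_true, if_false] at w1 wn
    simp [Ne.symm w1, Ne.symm wn]
  | true =>
    rw [hb] at w1 wn
    simp only [if_true] at w1 wn
    by_contra hcon
    simp only [decide_eq_true_eq, not_or] at hcon
    obtain ⟨c1, cn⟩ := hcon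
    have key : ∀ i, 1 ≤ i → i + 1 < n → rightBit (e i) ≠ leftBit (e (i + 1)) := by
      intro i hi
      induction i, hi using Nat.le_induction with
      | base =>
        intro _
        revert w1 c1
        generalize e 1 = a
        generalize e (1 + 1) = b
        revert a b; decide
      | succ i hi ih =>
        intro hlt
        exact cycleGuess_interior β (by omega) (by omega) _ _ _ (ih (by omega))
          (hw (i + 1) (by omega) (by omega))
    have kl := key (n - 1 - 1) (by omega) (by omega)
    rw [show n - 1 - 1 + 1 = n - 1 by omega] at kl
    revert wn cn kl
    generalize e (n - 1) = a
    generalize e (n - 1 - 1) = b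
    revert a b; decide

/-- On a cycle through `x`, the other sages have a strategy such that whenever they are all wrong,
the sage at `x` can compute any prescribed bit of its own color. -/
lemma exists_bit_guess {V : Type*} (G : SimpleGraph V) {x : V} (w : G.Walk x x) (h : w.IsCycle)
    (β : Fin 3 → Bool) :
    ∃ (F : HatStrategy G) (B : (G.neighborSet x → Fin 3) → Bool), ∀ c : V → Fin 3,
      (∃ v ∈ w.support, v ≠ x ∧ GuessesRight F c v) ∨ B (fun u => c u.1) = β (c x) := by
  have hn : 3 ≤ w.length := h.three_le_length
  have hinj := h.getVert_injOn
  have hp0 : w.getVert 0 = x := w.getVert_zero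
  have hpn : w.getVert w.length = x := w.getVert_length
  have hadj : ∀ i, i < w.length → G.Adj (w.getVert i) (w.getVert (i + 1)) :=
    fun i hi => w.adj_getVert_succ hi
  have hF : ∀ v : V, ∃ g : (G.neighborSet v → Fin 3) → Fin 3,
      ∀ i, 1 ≤ i → i < w.length → w.getVert i = v → ∀ c : V → Fin 3,
        g (fun u => c u.1) =
          cycleGuess β w.length i (c (w.getVert (i - 1))) (c (w.getVert (i + 1))) := by
    intro v
    by_cases hv : ∃ i, 1 ≤ i ∧ i < w.length ∧ w.getVert i = v
    · obtain ⟨i, hi1, hi2, rfl⟩ := hv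
      have ha : G.Adj (w.getVert i) (w.getVert (i - 1)) := by
        have := hadj (i - 1) (by omega)
        rw [Nat.sub_add_cancel hi1] at this
        exact this.symm
      refine ⟨fun d => cycleGuess β w.length i (d ⟨_, ha⟩) (d ⟨_, hadj i hi2⟩), ?_⟩
      intro j hj1 hj2 hji c
      obtain rfl : j = i := hinj ⟨hj1, hj2.le⟩ ⟨hi1, hi2.le⟩ hji
      rfl
    · exact ⟨fun _ => 0, fun i h1 h2 h3 => (hv ⟨i, h1, h2, h3⟩).elim⟩
  choose F hF using hF
  have ha1 : G.Adj x (w.getVert 1) := by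
    have := hadj 0 (by omega)
    rwa [hp0] at this
  have han : G.Adj x (w.getVert (w.length - 1)) := by
    have := hadj (w.length - 1) (by omega)
    rw [Nat.sub_add_cancel (by omega), hpn] at this
    exact this.symm
  refine ⟨F, fun d => decide (d ⟨_, ha1⟩ = 2 ∨ d ⟨_, han⟩ = 2), fun c => ?_⟩
  by_cases hc : ∃ v ∈ w.support, v ≠ x ∧ GuessesRight F c v
  · exact Or.inl hc
  · right
    have := bit_eq_of_all_wrong β hn (fun i => c (w.getVert i)) (by simp only [hp0, hpn]) (by
      intro i h1 h2 heq
      refine hc ⟨w.getVert i, w.getVert_mem_support i, fun hx => ?_, ?_⟩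
      · have := hinj ⟨h1, h2.le⟩ ⟨by omega, le_rfl⟩ (hx.trans hpn.symm)
        omega
      · exact (hF _ i h1 h2 rfl c).trans heq)
    simpa only [hp0] using this

theorem win_two_cycles_one_common_vertex {V : Type*} [Fintype V]
    (G : SimpleGraph V) (u v x : V) (w₁ : G.Walk u u) (w₂ : G.Walk v v)
    (h₁ : w₁.IsCycle) (h₂ : w₂.IsCycle)
    (hcommon : {y : V | y ∈ w₁.support} ∩ {y : V | y ∈ w₂.support} = {x}) :
    SagesWin G := by
  classical
  have hx : x ∈ w₁.support ∧ x ∈ w₂.support := by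
    have : x ∈ {y : V | y ∈ w₁.support} ∩ {y : V | y ∈ w₂.support} := by rw [hcommon]; rfl
    exact this
  have huniq : ∀ y, y ∈ w₁.support → y ∈ w₂.support → y = x := by
    intro y hy1 hy2
    have : y ∈ {y : V | y ∈ w₁.support} ∩ {y : V | y ∈ w₂.support} := ⟨hy1, hy2⟩
    rwa [hcommon] at this
  obtain ⟨F₁, B₁, H₁⟩ := exists_bit_guess G (w₁.rotate x hx.1) (h₁.rotate hx.1) colorBit₁
  obtain ⟨F₂, B₂, H₂⟩ := exists_bit_guess G (w₂.rotate x hx.2) (h₂.rotate hx.2) colorBit₂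
  have hdec : ∀ a : Fin 3,
      (if colorBit₁ a then (1 : Fin 3) else if colorBit₂ a then 2 else 0) = a := by decide
  refine ⟨fun y d => if hy : y = x then
      (if B₁ (hy ▸ d) then 1 else if B₂ (hy ▸ d) then 2 else 0)
    else if y ∈ w₁.support then F₁ y d else F₂ y d, fun c => ?_⟩
  rcases H₁ c with ⟨y, hy, hyx, hr⟩ | hb₁
  · refine ⟨y, ?_⟩
    rw [SimpleGraph.Walk.mem_support_rotate_iff] at hy
    simpa [GuessesRight, hyx, hy] using hr
  rcases H₂ c with ⟨y, hy, hyx, hr⟩ | hb₂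
  · refine ⟨y, ?_⟩
    rw [SimpleGraph.Walk.mem_support_rotate_iff] at hy
    have hy1 : y ∉ w₁.support := fun h => hyx (huniq y h hy)
    simpa [GuessesRight, hyx, hy1] using hr
  · refine ⟨x, ?_⟩
    simp only [GuessesRight, dif_pos, hb₁, hb₂]
    exact hdec _
end
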